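/- arXiv:math-ph/0004030 — 5 statements merged into one kernel-verified Lean document; each statement's English description precedes it below -/
import Mathlib

section
/- With the notation and hypotheses of the context, for every λ ∈ ℂ one has det[(λI − Z)·X + I] = γ·p(λ), where p(λ) = fᵀ·adjugate(λI − Z)·v and γ = wᵀ·e. -/
open Matrix

lemma det_add_rank_one_aux {n : ℕ} (M : Matrix (Fin n) (Fin n) ℂ) (e f : Fin n → ℂ)
    (hM : M.det ≠ 0) :
    (M + vecMulVec e f).det = M.det + f ⬝ᵥ (M.adjugate *ᵥ e) := by
  have hu : IsUnit M.det := isUnit_iff_ne_zero.mpr hM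
  have h1 : M + vecMulVec e f
      = M * (1 + replicateCol Unit (M⁻¹ *ᵥ e) * replicateRow Unit f) := by
    rw [← vecMulVec_eq, Matrix.mul_add, Matrix.mul_one, mul_vecMulVec, mulVec_mulVec,
      mul_nonsing_inv _ hu, one_mulVec]
  rw [h1, det_mul, det_one_add_replicateCol_mul_replicateRow, Matrix.inv_def, smul_mulVec,
    dotProduct_smul, Ring.inverse_eq_inv', smul_eq_mul, mul_add, mul_one, mul_inv_cancel_left₀ hM]

lemma det_add_rank_one {n : ℕ} (M : Matrix (Fin n) (Fin n) ℂ) (e f : Fin n → ℂ) :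
    (M + vecMulVec e f).det = M.det + f ⬝ᵥ (M.adjugate *ᵥ e) := by
  have hfin : {t : ℂ | (-M).charpoly.IsRoot t}.Finite :=
    Polynomial.finite_setOfPred_isRoot (Matrix.charpoly_monic _).ne_zero
  have hd := hfin.countable.dense_compl ℂ
  have hc : Continuous fun t : ℂ => M + t • (1 : Matrix (Fin n) (Fin n) ℂ) := by fun_prop
  have key := Continuous.ext_on
    (f := fun t : ℂ => ((M + t • (1 : Matrix (Fin n) (Fin n) ℂ)) + vecMulVec e f).det)
    (g := fun t : ℂ => (M + t • (1 : Matrix (Fin n) (Fin n) ℂ)).det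
      + f ⬝ᵥ ((M + t • (1 : Matrix (Fin n) (Fin n) ℂ)).adjugate *ᵥ e)) hd
    (hc.add continuous_const).matrix_det
    (hc.matrix_det.add (continuous_const.dotProduct
      (hc.matrix_adjugate.matrix_mulVec continuous_const)))
    (fun t ht => det_add_rank_one_aux _ e f (by
      intro h0
      apply ht
      simp only [Set.mem_setOf_eq, Polynomial.IsRoot, Matrix.eval_charpoly]
      rw [← h0, sub_neg_eq_add, add_comm, smul_one_eq_diagonal]
      rfl))
  simpa using congrFun key 0

/-- `det[(λI − Z)·X + I] = γ·p(λ)` where `p(λ) = fᵀ·adj(λI − Z)·v`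
and `γ = wᵀ·e`. -/
theorem det_left_factor (n : ℕ) (hn : 1 ≤ n)
    (X Z : Matrix (Fin n) (Fin n) ℂ)
    (hrank : (X * Z - Z * X + 1).rank = 1)
    (hdet : X.det = 0)
    (e f v w : Fin n → ℂ)
    (hef : X * Z - Z * X + 1 = vecMulVec e f)
    (hvw : X.adjugate = vecMulVec v w)
    (lam : ℂ) :
    ((lam • (1 : Matrix (Fin n) (Fin n) ℂ) - Z) * X + 1).det =
      (w ⬝ᵥ e) * (f ⬝ᵥ ((lam • (1 : Matrix (Fin n) (Fin n) ℂ) - Z).adjugate *ᵥ v)) := by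
  have h : (lam • (1 : Matrix (Fin n) (Fin n) ℂ) - Z) * X + 1
      = X * (lam • (1 : Matrix (Fin n) (Fin n) ℂ) - Z) + vecMulVec e f := by
    rw [← hef, Matrix.sub_mul, Matrix.mul_sub, Matrix.smul_mul, Matrix.mul_smul, Matrix.one_mul, Matrix.mul_one]
    abel
  rw [h, det_add_rank_one, det_mul, hdet, zero_mul, zero_add, adjugate_mul_distrib, hvw,
    ← mulVec_mulVec, vecMulVec_mulVec, op_smul_eq_smul, mulVec_smul, dotProduct_smul, smul_eq_mul]
end

section
/- With the notation and hypotheses of the context, for every λ ∈ ℂ one has det[X·(λI − Z) − I] = −μ·q(λ), where q(λ) = wᵀ·adjugate(λI − Z)·e and μ = fᵀ·v. -/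
open Matrix

/-- Matrix determinant lemma, invertible case. -/
theorem det_add_rank_one_aux_s2 {n : ℕ} (A : Matrix (Fin n) (Fin n) ℂ) (hA : A.det ≠ 0)
    (u v : Fin n → ℂ) :
    (A + vecMulVec u v).det = A.det + v ⬝ᵥ (A.adjugate *ᵥ u) := by
  have hu : IsUnit A.det := isUnit_iff_ne_zero.mpr hA
  have h1 : A + vecMulVec u v = A * (1 + replicateCol Unit (A⁻¹ *ᵥ u) * replicateRow Unit v) := by
    rw [← vecMulVec_eq, mul_add, mul_one, mul_vecMulVec, mulVec_mulVec, mul_nonsing_inv _ hu,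
      one_mulVec]
  rw [h1, det_mul, det_one_add_replicateCol_mul_replicateRow, mul_add, mul_one, inv_def,
    smul_mulVec, dotProduct_smul, smul_eq_mul, Ring.inverse_eq_inv', mul_inv_cancel_left₀ hA]

/-- Matrix determinant lemma. -/
theorem det_add_rank_one_s2 {n : ℕ} (A : Matrix (Fin n) (Fin n) ℂ) (u v : Fin n → ℂ) :
    (A + vecMulVec u v).det = A.det + v ⬝ᵥ (A.adjugate *ᵥ u) := by
  let B : ℂ → Matrix (Fin n) (Fin n) ℂ := fun t => A + t • 1
  have hB : Continuous B := by fun_prop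
  have hfin : {t : ℂ | (B t).det = 0}.Finite := by
    have h0 : (-A).charpoly ≠ 0 := (Matrix.charpoly_monic _).ne_zero
    refine ((-A).charpoly.roots.toFinset.finite_toSet).subset ?_
    intro t ht
    have : (B t).det = (-A).charpoly.eval t := by
      rw [Matrix.eval_charpoly]
      congr 1
      simp only [B, sub_neg_eq_add, add_comm, smul_one_eq_diagonal, scalar_apply]
    simp only [Set.mem_ofPred_eq] at ht
    simp [h0, ← this, ht]
  have key : (fun t => (B t + vecMulVec u v).det)
      = fun t => (B t).det + v ⬝ᵥ ((B t).adjugate *ᵥ u) := by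
    refine Continuous.ext_on (hfin.countable.dense_compl ℂ) ?_ ?_ ?_
    · exact (hB.add continuous_const).matrix_det
    · exact hB.matrix_det.add
        (continuous_const.dotProduct (hB.matrix_adjugate.matrix_mulVec continuous_const))
    · intro t ht
      exact det_add_rank_one_aux_s2 _ ht _ _
  simpa [B] using congrFun key 0

/-- `det[X·(λI − Z) − I] = −μ·q(λ)` where `q(λ) = wᵀ·adj(λI − Z)·e`
and `μ = fᵀ·v`. -/
theorem det_right_factor (n : ℕ) (hn : 1 ≤ n)
    (X Z : Matrix (Fin n) (Fin n) ℂ)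
    (hrank : (X * Z - Z * X + 1).rank = 1)
    (hdet : X.det = 0)
    (e f v w : Fin n → ℂ)
    (hef : X * Z - Z * X + 1 = vecMulVec e f)
    (hvw : X.adjugate = vecMulVec v w)
    (lam : ℂ) :
    (X * (lam • (1 : Matrix (Fin n) (Fin n) ℂ) - Z) - 1).det =
      -((f ⬝ᵥ v) * (w ⬝ᵥ ((lam • (1 : Matrix (Fin n) (Fin n) ℂ) - Z).adjugate *ᵥ e))) := by
  have h : X * (lam • (1 : Matrix (Fin n) (Fin n) ℂ) - Z) - 1
      = (lam • (1 : Matrix (Fin n) (Fin n) ℂ) - Z) * X + vecMulVec (-e) f := by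
    rw [neg_vecMulVec, ← hef, mul_sub, sub_mul, mul_smul_comm, smul_mul_assoc, mul_one, one_mul]
    abel
  rw [h, det_add_rank_one_s2, det_mul, hdet, mul_zero, zero_add, adjugate_mul_distrib, hvw,
    mulVec_neg, dotProduct_neg, ← mulVec_mulVec, vecMulVec_mulVec]
  simp [dotProduct_smul, mul_comm]
end

section
/- With the notation and hypotheses of the context (in particular τ(x₀, m₀) = 0, i.e. det X' = 0), one has the factorization γ·μ·τ(x₀ + η, m₀ − 1) = (λ₁ − λ₂)·τ(x₀ + η, m₀)·τ(x₀, m₀ − 1). -/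
open Matrix

theorem aux_det_add_unit {n : ℕ} (M : Matrix (Fin n) (Fin n) ℂ) (h : M.det ≠ 0) (u v : Fin n → ℂ) :
    (M + vecMulVec u v).det = M.det + v ⬝ᵥ (M.adjugate *ᵥ u) := by
  have hu : IsUnit M.det := isUnit_iff_ne_zero.mpr h
  have h1 : M + vecMulVec u v = M * (1 + vecMulVec (M⁻¹ *ᵥ u) v) := by
    rw [Matrix.mul_add, Matrix.mul_one, mul_vecMulVec, mulVec_mulVec, mul_nonsing_inv _ hu,
      one_mulVec]
  rw [h1, det_mul, vecMulVec_eq Unit, det_one_add_replicateCol_mul_replicateRow, inv_def,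
    smul_mulVec, dotProduct_smul, Ring.inverse_eq_inv', smul_eq_mul]
  field_simp

theorem aux_det_add {n : ℕ} (M : Matrix (Fin n) (Fin n) ℂ) (u v : Fin n → ℂ) :
    (M + vecMulVec u v).det = M.det + v ⬝ᵥ (M.adjugate *ᵥ u) := by
  have hfin : {t : ℂ | (-M).charpoly.eval t = 0}.Finite := by
    have := Polynomial.finite_setOfPred_isRoot ((-M).charpoly_monic.ne_zero)
    exact this
  have hd : Dense ({t : ℂ | (-M).charpoly.eval t = 0}ᶜ) := hfin.countable.dense_compl ℝ
  have hc : Continuous fun t : ℂ => (M + t • (1 : Matrix (Fin n) (Fin n) ℂ)) := by fun_prop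
  have key := Continuous.ext_on hd
    (f := fun t : ℂ => ((M + t • (1 : Matrix (Fin n) (Fin n) ℂ)) + vecMulVec u v).det)
    (g := fun t : ℂ => (M + t • (1 : Matrix (Fin n) (Fin n) ℂ)).det +
      v ⬝ᵥ ((M + t • (1 : Matrix (Fin n) (Fin n) ℂ)).adjugate *ᵥ u))
    (Continuous.matrix_det (hc.add continuous_const))
    ((Continuous.matrix_det hc).add
      (Continuous.dotProduct continuous_const
        (Continuous.matrix_mulVec (Continuous.matrix_adjugate hc) continuous_const)))
    (by
      intro t ht
      apply aux_det_add_unit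
      intro h0
      apply ht
      show (-M).charpoly.eval t = 0
      rw [eval_charpoly, ← h0]
      congr 1
      rw [sub_neg_eq_add, add_comm, scalar_apply, ← smul_one_eq_diagonal])
  simpa using congrFun key 0

/-- Core identities, for commuting `A`, `B` with `B - A = d`. -/
theorem aux_core {n : ℕ} (M A B : Matrix (Fin n) (Fin n) ℂ) (d : ℂ)
    (e f v w : Fin n → ℂ) (hM : M.det = 0) (hA : A.det ≠ 0) (hB : B.det ≠ 0)
    (hd : B - A = d • (1 : Matrix (Fin n) (Fin n) ℂ))
    (h1 : A * M + 1 = M * A + vecMulVec e f)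
    (h2 : M * B - 1 = B * M - vecMulVec e f)
    (hvw : M.adjugate = vecMulVec v w) :
    (w ⬝ᵥ e) * (f ⬝ᵥ v) * (M + A⁻¹ - B⁻¹).det =
      -d * (M + A⁻¹).det * (M - B⁻¹).det := by
  have hAu : IsUnit A.det := isUnit_iff_ne_zero.mpr hA
  have hBu : IsUnit B.det := isUnit_iff_ne_zero.mpr hB
  have e1 : A.det * (M + A⁻¹).det = (f ⬝ᵥ (A.adjugate *ᵥ v)) * (w ⬝ᵥ e) := by
    rw [← det_mul, Matrix.mul_add, mul_nonsing_inv _ hAu, h1, aux_det_add, det_mul, hM,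
      adjugate_mul_distrib, hvw, mul_vecMulVec, vecMulVec_mulVec]
    simp [mul_comm]
  have e2 : (M - B⁻¹).det * B.det = - ((f ⬝ᵥ v) * (w ⬝ᵥ (B.adjugate *ᵥ e))) := by
    rw [← det_mul, Matrix.sub_mul, nonsing_inv_mul _ hBu, h2, sub_eq_add_neg, ← vecMulVec_neg,
      aux_det_add, det_mul, hM,
      adjugate_mul_distrib, hvw, ← mulVec_mulVec, vecMulVec_mulVec]
    simp [mul_comm]
  have e3 : A.det * (M + A⁻¹ - B⁻¹).det * B.det =
      d * ((f ⬝ᵥ (A.adjugate *ᵥ v)) * (w ⬝ᵥ (B.adjugate *ᵥ e))) := by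
    have : A * (M + A⁻¹ - B⁻¹) * B = B * M * A + vecMulVec e (d • f) := by
      have hx : A * (M + A⁻¹ - B⁻¹) * B = A * M * B + B - A := by
        rw [Matrix.mul_sub, Matrix.mul_add, mul_nonsing_inv _ hAu, Matrix.sub_mul,
          Matrix.add_mul, Matrix.one_mul, Matrix.mul_assoc A B⁻¹, nonsing_inv_mul _ hBu,
          Matrix.mul_one]
      have hBA : B * A = A * B := by
        rw [sub_eq_iff_eq_add.mp hd]; simp [Matrix.add_mul, Matrix.mul_add]
      have hv : vecMulVec e (d • f) = vecMulVec e f * B - vecMulVec e f * A := by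
        rw [← Matrix.mul_sub, hd]; simp [vecMulVec_smul]
      have h3 : A * M = M * A + vecMulVec e f - 1 := eq_sub_of_add_eq h1
      have h4 : B * M = M * B - 1 + vecMulVec e f := (eq_add_of_sub_eq (by rw [h2])) 
      rw [hx, hv, h3, h4]
      simp only [Matrix.add_mul, Matrix.sub_mul, Matrix.one_mul, Matrix.mul_assoc, hBA]
      abel
    rw [← det_mul, ← det_mul, this, aux_det_add, det_mul, det_mul, hM,
      adjugate_mul_distrib, adjugate_mul_distrib, hvw, ← mulVec_mulVec, ← mulVec_mulVec,
      vecMulVec_mulVec]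
    simp [mulVec_smul, mul_comm]
    ring
  have hAB : A.det * B.det ≠ 0 := mul_ne_zero hA hB
  apply mul_left_cancel₀ hAB
  linear_combination (w ⬝ᵥ e) * (f ⬝ᵥ v) * e3 + d * (M - B⁻¹).det * B.det * e1 +
    d * (f ⬝ᵥ (A.adjugate *ᵥ v)) * (w ⬝ᵥ e) * e2



/-- factorization `γ·μ·τ(x₀ + η, m₀ − 1) = (λ₁ − λ₂)·τ(x₀ + η, m₀)·τ(x₀, m₀ − 1)`. -/
theorem tau_factorization_up (n : ℕ) (hn : 1 ≤ n)
    (X Z : Matrix (Fin n) (Fin n) ℂ)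
    (hrank : (X * Z - Z * X + 1).rank = 1)
    (η : ℂ) (hη : η ≠ 0)
    (lam₁ lam₂ : ℂ)
    (hlam₁ : lam₁ ∉ spectrum ℂ Z) (hlam₂ : lam₂ ∉ spectrum ℂ Z)
    (τ : ℂ → ℂ → ℂ)
    (hτ : ∀ x m : ℂ, τ x m =
      (X + (x / η) • (lam₁ • (1 : Matrix (Fin n) (Fin n) ℂ) - Z)⁻¹ +
        m • (lam₂ • (1 : Matrix (Fin n) (Fin n) ℂ) - Z)⁻¹).det)
    (x₀ m₀ : ℂ) (hroot : τ x₀ m₀ = 0)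
    (X' : Matrix (Fin n) (Fin n) ℂ)
    (hX' : X' = X + (x₀ / η) • (lam₁ • (1 : Matrix (Fin n) (Fin n) ℂ) - Z)⁻¹ +
        m₀ • (lam₂ • (1 : Matrix (Fin n) (Fin n) ℂ) - Z)⁻¹)
    (hrank' : (X' * Z - Z * X' + 1).rank = 1)
    (e f v w : Fin n → ℂ)
    (hef : X' * Z - Z * X' + 1 = vecMulVec e f)
    (hvw : X'.adjugate = vecMulVec v w) :
    (w ⬝ᵥ e) * (f ⬝ᵥ v) * τ (x₀ + η) (m₀ - 1) =
      (lam₁ - lam₂) * τ (x₀ + η) m₀ * τ x₀ (m₀ - 1) := by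
  have hdet : ∀ l : ℂ, l ∉ spectrum ℂ Z → (l • (1 : Matrix (Fin n) (Fin n) ℂ) - Z).det ≠ 0 := by
    intro l hl
    rw [spectrum.notMem_iff, Algebra.algebraMap_eq_smul_one, isUnit_iff_isUnit_det] at hl
    exact hl.ne_zero
  have core := aux_core X' (lam₁ • (1 : Matrix (Fin n) (Fin n) ℂ) - Z)
    (lam₂ • (1 : Matrix (Fin n) (Fin n) ℂ) - Z) (lam₂ - lam₁) e f v w
    (by rw [hX', ← hτ, hroot]) (hdet _ hlam₁) (hdet _ hlam₂)
    (by rw [sub_smul]; abel)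
    (by rw [← hef]; simp only [Matrix.sub_mul, Matrix.mul_sub, Matrix.smul_mul, Matrix.mul_smul,
          Matrix.one_mul, Matrix.mul_one]; abel)
    (by rw [← hef]; simp only [Matrix.sub_mul, Matrix.mul_sub, Matrix.smul_mul, Matrix.mul_smul,
          Matrix.one_mul, Matrix.mul_one]; abel)
    hvw
  have hx : (x₀ + η) / η = x₀ / η + 1 := by field_simp
  have t1 : τ (x₀ + η) (m₀ - 1) = (X' + (lam₁ • (1 : Matrix (Fin n) (Fin n) ℂ) - Z)⁻¹ -
      (lam₂ • (1 : Matrix (Fin n) (Fin n) ℂ) - Z)⁻¹).det := by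
    rw [hτ, hX', hx, add_smul, sub_smul, one_smul, one_smul]; congr 1; abel
  have t2 : τ (x₀ + η) m₀ = (X' + (lam₁ • (1 : Matrix (Fin n) (Fin n) ℂ) - Z)⁻¹).det := by
    rw [hτ, hX', hx, add_smul, one_smul]; congr 1; abel
  have t3 : τ x₀ (m₀ - 1) = (X' - (lam₂ • (1 : Matrix (Fin n) (Fin n) ℂ) - Z)⁻¹).det := by
    rw [hτ, hX', sub_smul, one_smul]; congr 1; abel
  rw [t1, t2, t3, core]
  ring
end

section
/- With the notation and hypotheses of the context (in particular τ(x₀, m₀) = 0, i.e. det X' = 0), one has the factorization γ·μ·τ(x₀ − η, m₀ + 1) = (λ₂ − λ₁)·τ(x₀, m₀ + 1)·τ(x₀ − η, m₀). -/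
open Matrix

lemma det_lemma_unit {n : ℕ} (K : Matrix (Fin n) (Fin n) ℂ) (hK : K.det ≠ 0) (e f : Fin n → ℂ) :
    (K + vecMulVec e f).det = K.det + f ⬝ᵥ (K.adjugate *ᵥ e) := by
  rw [vecMulVec_eq Unit, det_add_replicateCol_mul_replicateRow (isUnit_iff_ne_zero.mpr hK),
    Matrix.det_unique (1 + _), Matrix.add_apply, Matrix.mul_assoc, ← replicateCol_mulVec,
    replicateRow_mul_replicateCol_apply, Matrix.inv_def, smul_mulVec, dotProduct_smul,
    Ring.inverse_eq_inv', smul_eq_mul, one_apply_eq]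
  field_simp

lemma det_lemma {n : ℕ} (K : Matrix (Fin n) (Fin n) ℂ) (e f : Fin n → ℂ) :
    (K + vecMulVec e f).det = K.det + f ⬝ᵥ (K.adjugate *ᵥ e) := by
  let S : ℂ → Matrix (Fin n) (Fin n) ℂ := fun t => t • (1 : Matrix (Fin n) (Fin n) ℂ) + K
  have hS : Continuous S := by fun_prop
  have hS0 : S 0 = K := by simp [S]
  have h1 : Continuous (fun t => (S t + vecMulVec e f).det) :=
    (hS.add continuous_const).matrix_det
  have h2 : Continuous (fun t => (S t).det + f ⬝ᵥ ((S t).adjugate *ᵥ e)) :=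
    hS.matrix_det.add (continuous_const.dotProduct (hS.matrix_adjugate.matrix_mulVec continuous_const))
  have hfin : {t : ℂ | (S t).det = 0}.Finite := by
    refine ((-K).charpoly.roots.toFinset.finite_toSet).subset ?_
    intro t ht
    simp only [Set.mem_ofPred_eq, S] at ht
    simp only [Finset.mem_coe, Multiset.mem_toFinset]
    rw [Polynomial.mem_roots (charpoly_monic _).ne_zero, Polynomial.IsRoot, eval_charpoly, ← ht]
    congr 1
    rw [sub_neg_eq_add, scalar_apply, ← smul_one_eq_diagonal]
  have hd : Dense {t : ℂ | (S t).det = 0}ᶜ := Set.Countable.dense_compl ℂ (Set.Finite.countable hfin)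
  have h := Continuous.ext_on hd h1 h2 (fun t ht => det_lemma_unit (S t) ht e f)
  have h0 := congrFun h 0
  simpa [hS0] using h0

/-- factorization `γ·μ·τ(x₀ − η, m₀ + 1) = (λ₂ − λ₁)·τ(x₀, m₀ + 1)·τ(x₀ − η, m₀)`. -/
theorem tau_factorization_down (n : ℕ) (hn : 1 ≤ n)
    (X Z : Matrix (Fin n) (Fin n) ℂ)
    (hrank : (X * Z - Z * X + 1).rank = 1)
    (η : ℂ) (hη : η ≠ 0)
    (lam₁ lam₂ : ℂ)
    (hlam₁ : lam₁ ∉ spectrum ℂ Z) (hlam₂ : lam₂ ∉ spectrum ℂ Z)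
    (τ : ℂ → ℂ → ℂ)
    (hτ : ∀ x m : ℂ, τ x m =
      (X + (x / η) • (lam₁ • (1 : Matrix (Fin n) (Fin n) ℂ) - Z)⁻¹ +
        m • (lam₂ • (1 : Matrix (Fin n) (Fin n) ℂ) - Z)⁻¹).det)
    (x₀ m₀ : ℂ) (hroot : τ x₀ m₀ = 0)
    (X' : Matrix (Fin n) (Fin n) ℂ)
    (hX' : X' = X + (x₀ / η) • (lam₁ • (1 : Matrix (Fin n) (Fin n) ℂ) - Z)⁻¹ +
        m₀ • (lam₂ • (1 : Matrix (Fin n) (Fin n) ℂ) - Z)⁻¹)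
    (hrank' : (X' * Z - Z * X' + 1).rank = 1)
    (e f v w : Fin n → ℂ)
    (hef : X' * Z - Z * X' + 1 = vecMulVec e f)
    (hvw : X'.adjugate = vecMulVec v w) :
    (w ⬝ᵥ e) * (f ⬝ᵥ v) * τ (x₀ - η) (m₀ + 1) =
      (lam₂ - lam₁) * τ x₀ (m₀ + 1) * τ (x₀ - η) m₀ := by
  have hP : IsUnit (lam₁ • (1 : Matrix (Fin n) (Fin n) ℂ) - Z) := by
    rw [spectrum.notMem_iff, Algebra.algebraMap_eq_smul_one] at hlam₁; exact hlam₁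
  have hQ : IsUnit (lam₂ • (1 : Matrix (Fin n) (Fin n) ℂ) - Z) := by
    rw [spectrum.notMem_iff, Algebra.algebraMap_eq_smul_one] at hlam₂; exact hlam₂
  rw [isUnit_iff_isUnit_det] at hP hQ
  have hM0 : X'.det = 0 := by rw [hX', ← hτ, hroot]
  have t1 : τ (x₀ - η) (m₀ + 1) = (X' - (lam₁ • (1 : Matrix (Fin n) (Fin n) ℂ) - Z)⁻¹
      + (lam₂ • (1 : Matrix (Fin n) (Fin n) ℂ) - Z)⁻¹).det := by
    rw [hτ, hX', sub_div, div_self hη]; congr 1; module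
  have t2 : τ x₀ (m₀ + 1) = (X' + (lam₂ • (1 : Matrix (Fin n) (Fin n) ℂ) - Z)⁻¹).det := by
    rw [hτ, hX']; congr 1; module
  have t3 : τ (x₀ - η) m₀ = (X' - (lam₁ • (1 : Matrix (Fin n) (Fin n) ℂ) - Z)⁻¹).det := by
    rw [hτ, hX', sub_div, div_self hη]; congr 1; module
  rw [t1, t2, t3]
  generalize hPd : lam₁ • (1 : Matrix (Fin n) (Fin n) ℂ) - Z = P at *
  generalize hQd : lam₂ • (1 : Matrix (Fin n) (Fin n) ℂ) - Z = Q at *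
  have hPP : P⁻¹ * P = 1 := nonsing_inv_mul P hP
  have hQQ : Q * Q⁻¹ = 1 := mul_nonsing_inv Q hQ
  have hMP : X' * P = P * X' + 1 - vecMulVec e f := by
    rw [← hef, ← hPd]; simp only [mul_sub, sub_mul, Matrix.mul_smul, Matrix.smul_mul, mul_one, one_mul]; abel
  have hQM : Q * X' = X' * Q - 1 + vecMulVec e f := by
    rw [← hef, ← hQd]; simp only [mul_sub, sub_mul, Matrix.mul_smul, Matrix.smul_mul, mul_one, one_mul]; abel
  have hPQ : P = Q + (lam₁ - lam₂) • (1 : Matrix (Fin n) (Fin n) ℂ) := by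
    rw [← hPd, ← hQd]; module
  have hcomm : P * Q = Q * P := by
    rw [hPQ]; simp [mul_add, add_mul]

  have eN : (X' - P⁻¹) * P = P * X' + vecMulVec (-e) f := by
    rw [sub_mul, hPP, hMP, neg_vecMulVec]; abel
  have eB : Q * (X' + Q⁻¹) = X' * Q + vecMulVec e f := by
    rw [mul_add, hQQ, hQM]; abel
  have hNcomm : Q * (X' - P⁻¹) = (X' - P⁻¹) * Q - 1 + vecMulVec e f := by
    have hc : Q * P⁻¹ = P⁻¹ * Q := by
      calc Q * P⁻¹ = P⁻¹ * (P * Q) * P⁻¹ := by rw [← mul_assoc P⁻¹, hPP, one_mul]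
        _ = P⁻¹ * Q * (P * P⁻¹) := by rw [hcomm]; simp only [mul_assoc]
        _ = P⁻¹ * Q := by rw [mul_nonsing_inv P hP, mul_one]
    rw [mul_sub, sub_mul, hc, hQM]; abel
  have eC : Q * (X' - P⁻¹ + Q⁻¹) * P = P * X' * Q + vecMulVec ((lam₁ - lam₂) • e) f := by
    have : Q * (X' - P⁻¹ + Q⁻¹) = (X' - P⁻¹) * Q + vecMulVec e f := by
      rw [mul_add, hQQ, hNcomm]; abel
    rw [this, add_mul, mul_assoc, ← hcomm, ← mul_assoc, eN, add_mul]
    have h2 : vecMulVec e f * P = vecMulVec e f * Q + (lam₁ - lam₂) • vecMulVec e f := by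
      rw [hPQ, mul_add, Matrix.mul_smul, mul_one]
    rw [h2, neg_vecMulVec, neg_mul, smul_vecMulVec]; abel
  have dN := congrArg Matrix.det eN
  have dB := congrArg Matrix.det eB
  have dC := congrArg Matrix.det eC
  rw [det_lemma] at dN dB dC
  simp only [det_mul, hM0, adjugate_mul_distrib, hvw, mul_zero, zero_mul, zero_add,
    mul_vecMulVec, vecMulVec_mul, vecMulVec_mulVec, mulVec_neg, mulVec_smul, dotProduct_smul,
    dotProduct_neg, smul_eq_mul, MulOpposite.smul_eq_mul_unop, MulOpposite.unop_op] at dN dB dC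
  have hp : P.det ≠ 0 := hP.ne_zero
  have hq : Q.det ≠ 0 := hQ.ne_zero
  apply mul_left_cancel₀ (mul_ne_zero hp hq)
  linear_combination (w ⬝ᵥ e) * (f ⬝ᵥ v) * dC -
    (lam₂ - lam₁) * ((X' - P⁻¹).det * P.det * dB
      + (f ⬝ᵥ Q.adjugate *ᵥ v) * (w ⬝ᵥ e) * dN)
end

section
/- Let n ≥ 1, let X, Z be n×n complex matrices, let η ∈ ℂ with η ≠ 0, and let λ₁, λ₂ ∈ ℂ not be eigenvalues of Z. For m ∈ ℂ define the matrix 𝒳(m) = −η·X·(λ₁I − Z) − m·η·(λ₂I − Z)⁻¹·(λ₁I − Z), and for x, m ∈ ℂ define τ(x, m) = det(X + (x/η)·(λ₁I − Z)⁻¹ + m·(λ₂I − Z)⁻¹). Then for all x, m ∈ ℂ, det(x·I − 𝒳(m)) = ηⁿ·det(λ₁I − Z)·τ(x, m). In particular, the eigenvalues of 𝒳(m) are exactly the roots of the polynomial x ↦ τ(x, m). -/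
open Matrix

/-- the characteristic polynomial of the free-flow matrix
`𝒳(m) = −η X (λ₁I − Z) − mη (λ₂I − Z)⁻¹ (λ₁I − Z)` is proportional to the
tau-function: `det(xI − 𝒳(m)) = ηⁿ det(λ₁I − Z) τ(x, m)`; in particular the
eigenvalues of `𝒳(m)` are exactly the roots of `x ↦ τ(x, m)`. -/
theorem charpoly_eq_tau (n : ℕ) (hn : 1 ≤ n)
    (X Z : Matrix (Fin n) (Fin n) ℂ)
    (η : ℂ) (hη : η ≠ 0)
    (lam₁ lam₂ : ℂ)
    (hlam₁ : lam₁ ∉ spectrum ℂ Z) (hlam₂ : lam₂ ∉ spectrum ℂ Z)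
    (𝒳 : ℂ → Matrix (Fin n) (Fin n) ℂ)
    (h𝒳 : ∀ m : ℂ, 𝒳 m =
      (-η) • (X * (lam₁ • (1 : Matrix (Fin n) (Fin n) ℂ) - Z)) -
        (m * η) • ((lam₂ • (1 : Matrix (Fin n) (Fin n) ℂ) - Z)⁻¹ *
          (lam₁ • (1 : Matrix (Fin n) (Fin n) ℂ) - Z)))
    (τ : ℂ → ℂ → ℂ)
    (hτ : ∀ x m : ℂ, τ x m =
      (X + (x / η) • (lam₁ • (1 : Matrix (Fin n) (Fin n) ℂ) - Z)⁻¹ +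
        m • (lam₂ • (1 : Matrix (Fin n) (Fin n) ℂ) - Z)⁻¹).det) :
    ∀ x m : ℂ,
      (x • (1 : Matrix (Fin n) (Fin n) ℂ) - 𝒳 m).det =
        η ^ n * (lam₁ • (1 : Matrix (Fin n) (Fin n) ℂ) - Z).det * τ x m ∧
      (x ∈ spectrum ℂ (𝒳 m) ↔ τ x m = 0) := by
  intro x m
  have hu : IsUnit (lam₁ • (1 : Matrix (Fin n) (Fin n) ℂ) - Z).det := by
    rw [← Matrix.isUnit_iff_isUnit_det]
    have h := spectrum.notMem_iff.mp hlam₁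
    rwa [Algebra.algebraMap_eq_smul_one] at h
  have key : (x • (1 : Matrix (Fin n) (Fin n) ℂ) - 𝒳 m).det =
        η ^ n * (lam₁ • (1 : Matrix (Fin n) (Fin n) ℂ) - Z).det * τ x m := by
    rw [h𝒳, hτ]
    generalize lam₁ • (1 : Matrix (Fin n) (Fin n) ℂ) - Z = A at hu ⊢
    generalize (lam₂ • (1 : Matrix (Fin n) (Fin n) ℂ) - Z)⁻¹ = B
    have h1 : x • (1 : Matrix (Fin n) (Fin n) ℂ) - ((-η) • (X * A) - (m * η) • (B * A))
        = η • ((X + (x / η) • A⁻¹ + m • B) * A) := by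
      rw [add_mul, add_mul, smul_mul_assoc, smul_mul_assoc, Matrix.nonsing_inv_mul A hu,
        smul_add, smul_add, smul_smul, smul_smul, mul_div_cancel₀ x hη, neg_smul, mul_comm m η]
      abel
    rw [h1, Matrix.det_smul, Matrix.det_mul, Fintype.card_fin]
    ring
  refine ⟨key, ?_⟩
  rw [spectrum.mem_iff, Algebra.algebraMap_eq_smul_one, Matrix.isUnit_iff_isUnit_det,
    isUnit_iff_ne_zero, not_not, key]
  have h0 := hu.ne_zero
  simp [hη, h0]
end
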